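/- Value as discounted accumulated reward: let S be a nonempty finite type, P : Matrix S S ℝ a row-stochastic matrix, γ ∈ ℝ with 0 ≤ γ < 1, and R : S → ℝ. Then the value vector V = (I − γ·P)⁻¹ *ᵥ R equals the convergent series V = Σ'_{k=0}^{∞} γ^k · (P^k *ᵥ R), where convergence is componentwise and P^0 = I. -/

import Mathlib

open Matrix BigOperators

/-- A matrix is row-stochastic if all entries are nonnegative and every row sums to 1. -/
def RowStochastic {S : Type*} [Fintype S] (P : Matrix S S ℝ) : Prop :=
  (∀ i j, 0 ≤ P i j) ∧ (∀ i, ∑ j, P i j = 1)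

theorem RowStochastic.sum_norm_eq_one {S : Type*} [Fintype S] {P : Matrix S S ℝ}
    (hP : RowStochastic P) (i : S) : ∑ j, ‖P i j‖ = 1 := by
  simpa only [Real.norm_of_nonneg (hP.1 i _)] using hP.2 i

theorem hasSum_mulVec {ι m n α : Type*} [Fintype n] [NonUnitalNonAssocSemiring α]
    [TopologicalSpace α] [IsTopologicalSemiring α] {f : ι → Matrix m n α} {A : Matrix m n α}
    (hf : HasSum f A) (v : n → α) : HasSum (fun k ↦ f k *ᵥ v) (A *ᵥ v) :=
  hf.map (mulVec.addMonoidHomLeft v) (continuous_id.matrix_mulVec continuous_const)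

open scoped Matrix.Norms.Operator in
theorem linfty_opNorm_lt_iff {m n α : Type*} [Fintype m] [Fintype n] [SeminormedAddCommGroup α]
    {A : Matrix m n α} {r : ℝ} (hr : 0 < r) : ‖A‖ < r ↔ ∀ i, ∑ j, ‖A i j‖ < r := by
  lift r to NNReal using hr.le
  rw [linfty_opNorm_def, NNReal.coe_lt_coe, Finset.sup_lt_iff (NNReal.coe_pos.mp hr)]
  simp only [Finset.mem_univ, true_imp_iff, ← NNReal.coe_lt_coe, NNReal.coe_sum, coe_nnnorm]

section DiscountedSeries

variable {S 𝕜 : Type*} [Fintype S] [DecidableEq S] [NormedCommRing 𝕜] [CompleteSpace 𝕜]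

theorem hasSum_pow_inv_one_sub (M : Matrix S S 𝕜) (hM : ∀ i, ∑ j, ‖M i j‖ < 1) :
    HasSum (fun k : ℕ ↦ M ^ k) (1 - M)⁻¹ := by
  let : NormedRing (Matrix S S 𝕜) := Matrix.linftyOpNormedRing
  -- The uniformity of this norm is the entrywise one only up to unfolding, so instance search
  -- does not find completeness.
  have : HasSummableGeomSeries (Matrix S S 𝕜) :=
    @instHasSummableGeomSeriesOfCompleteSpace _ _ (inferInstanceAs (CompleteSpace (S → S → 𝕜)))
  rw [nonsing_inv_eq_ringInverse]
  exact hasSum_geom_series_inverse M ((linfty_opNorm_lt_iff one_pos).mpr hM)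

theorem value_eq_discounted_series_general {P : Matrix S S 𝕜} (hP : ∀ i, ∑ j, ‖P i j‖ ≤ 1)
    {γ : 𝕜} (hγ : ‖γ‖ < 1) (R : S → 𝕜) (s : S) :
    HasSum (fun k : ℕ ↦ γ ^ k * (P ^ k *ᵥ R) s) (((1 - γ • P)⁻¹ *ᵥ R) s) := by
  have hγP (i : S) : ∑ j, ‖(γ • P) i j‖ < 1 :=
    calc ∑ j, ‖γ * P i j‖ ≤ ∑ j, ‖γ‖ * ‖P i j‖ := Finset.sum_le_sum fun j _ ↦ norm_mul_le γ (P i j)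
      _ = ‖γ‖ * ∑ j, ‖P i j‖ := (Finset.mul_sum ..).symm
      _ ≤ ‖γ‖ := mul_le_of_le_one_right (norm_nonneg γ) (hP i)
      _ < 1 := hγ
  have hV : HasSum (fun k : ℕ ↦ (γ • P) ^ k *ᵥ R) ((1 - γ • P)⁻¹ *ᵥ R) :=
    hasSum_mulVec (hasSum_pow_inv_one_sub (γ • P) hγP) R
  simpa only [smul_pow, smul_mulVec, Pi.smul_apply, smul_eq_mul] using Pi.hasSum.mp hV s

end DiscountedSeries

/-- The value vector `(I - γ•P)⁻¹ *ᵥ R` equals the componentwise-convergent series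
`∑ₖ γ^k • (P^k *ᵥ R)`. -/
theorem value_eq_discounted_series {S : Type*} [Fintype S] [DecidableEq S] [Nonempty S]
    (P : Matrix S S ℝ) (hP : RowStochastic P) (γ : ℝ) (hγ0 : 0 ≤ γ) (hγ1 : γ < 1)
    (R : S → ℝ) :
    ∀ s : S, HasSum (fun k : ℕ => γ ^ k * ((P ^ k) *ᵥ R) s) (((1 - γ • P)⁻¹ *ᵥ R) s) :=
  value_eq_discounted_series_general (fun i ↦ (hP.sum_norm_eq_one i).le)
    ((Real.norm_of_nonneg hγ0).trans_lt hγ1) R
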